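/- For every n ≥ 1 and every binary string w of length n, occ_B(w, S_n) = 1; that is, w occurs exactly once as a substring of S_n at a starting position divisible by n, so S_n is an enumeration of all binary strings of length n in aligned blocks. -/

import Mathlib

/-- `occ w x`: the number of indices `i` with `x[i..i+|w|-1] = w`,
i.e. the number of occurrences of `w` as a substring of `x`. -/
def occ (w x : List Bool) : ℕ :=
  ((List.range (x.length + 1 - w.length)).filter
    (fun i => decide ((x.drop i).take w.length = w))).length

/-- `occB w x`: the number of occurrences of `w` as a substring of `x`
starting at a position divisible by `|w|` (aligned block occurrences). -/
def occB (w x : List Bool) : ℕ :=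
  ((List.range (x.length + 1 - w.length)).filter
    (fun i => decide (i % w.length = 0) && decide ((x.drop i).take w.length = w))).length

/-- `x` is a de Bruijn string of order `n`: it has length `2^n` and every binary
string of length `n` occurs exactly once as a substring of `x ++ x[0..n-2]`. -/
def IsDeBruijn (n : ℕ) (x : List Bool) : Prop :=
  x.length = 2 ^ n ∧ ∀ w : List Bool, w.length = n → occ w (x ++ x.take (n - 1)) = 1

open Classical in
/-- `db n` is the lexicographically least de Bruijn string of order `n`
(using the lexicographic order on `List Bool`, with `false < true`);
`[]` if none exists. -/
noncomputable def db (n : ℕ) : List Bool :=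
  if h : ∃ x : List Bool, IsDeBruijn n x ∧ ∀ y, IsDeBruijn n y → x ≤ y then h.choose else []

/-- The block `B_{n,i} = db_i(n)^t`: `t` copies of the cyclic left shift of `db n` by `i`. -/
noncomputable def Bblk (n t i : ℕ) : List Bool := (List.replicate t ((db n).rotate i)).flatten

/-- The odd part `t` of `n = 2^s * t`. -/
def oddPart (n : ℕ) : ℕ := n / 2 ^ (n.factorization 2)

/-- `Sblk n` is the string `S_n = B_{n,0} B_{n,1} ⋯ B_{n,2^s-1}` where `n = 2^s * t`, `t` odd. -/
noncomputable def Sblk (n : ℕ) : List Bool :=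
  ((List.range (2 ^ (n.factorization 2))).map (fun i => Bblk n (oddPart n) i)).flatten

/-- `Sfin m = S_1 S_2 ⋯ S_m`. -/
noncomputable def Sfin (m : ℕ) : List Bool := ((List.range m).map (fun k => Sblk (k + 1))).flatten

/-- The infinite sequence `S = S_1 S_2 S_3 ⋯`, as a function giving its `i`-th bit. -/
noncomputable def Sseq (i : ℕ) : Bool := (Sfin (i + 1)).getD i false

/-- For odd `n`, `S_n = db(n)^n`. -/
noncomputable def Sodd (n : ℕ) : List Bool := (List.replicate n (db n)).flatten

section Perm
open Equiv

lemma sameCycle_merge {V : Type*} [Fintype V] [DecidableEq V] (σ : Perm V) (x y : V)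
    (h : ¬ σ.SameCycle x y) : (σ * swap x y).SameCycle x y := by
  have key : ∀ j : ℕ, (σ * swap x y).SameCycle x ((σ ^ (j + 1)) y) := by
    intro j
    induction j with
    | zero =>
      refine ⟨1, ?_⟩
      simp
    | succ j ih =>
      by_cases hy : (σ ^ (j + 1)) y = y
      · rw [pow_succ' σ (j + 1), Perm.mul_apply, hy]
        refine ⟨1, ?_⟩
        simp
      · have hx : (σ ^ (j + 1)) y ≠ x := by
          intro hx
          apply h
          apply Perm.SameCycle.symm
          exact ⟨((j + 1 : ℕ) : ℤ), by rw [zpow_natCast]; exact hx⟩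
        have : (σ ^ (j + 1 + 1)) y = (σ * swap x y) ((σ ^ (j + 1)) y) := by
          rw [pow_succ' σ (j + 1), Perm.mul_apply, Perm.mul_apply, swap_apply_of_ne_of_ne hx hy]
        rw [this]
        exact Perm.sameCycle_apply_right.2 ih
  have h1 := key (orderOf σ - 1)
  rw [Nat.sub_add_cancel (orderOf_pos σ), pow_orderOf_eq_one] at h1
  simpa using h1

lemma sameCycle_mono {V : Type*} [Fintype V] [DecidableEq V] (σ : Perm V) (x y : V)
    (h : ¬ σ.SameCycle x y) (a b : V) (hab : σ.SameCycle a b) :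
    (σ * swap x y).SameCycle a b := by
  have hxy := sameCycle_merge σ x y h
  have step : ∀ a, (σ * swap x y).SameCycle a (σ a) := by
    intro a
    by_cases hx : a = x
    · subst hx
      refine hxy.trans ⟨1, by simp⟩
    · by_cases hy : a = y
      · subst hy
        refine hxy.symm.trans ⟨1, by simp⟩
      · exact ⟨1, by simp [swap_apply_of_ne_of_ne hx hy]⟩
  obtain ⟨k, hk⟩ := hab.exists_nat_pow_eq
  rw [← hk]
  clear hk
  induction k with
  | zero => simpa using Perm.SameCycle.refl _ a
  | succ k ih =>
    rw [pow_succ', Perm.mul_apply]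
    exact ih.trans (step _)

/-- shift permutations -/
def IsShift (m : ℕ) (σ : Perm (Fin (m + 1) → Bool)) : Prop :=
  ∀ v (i : Fin m), σ v i.castSucc = v i.succ

lemma exists_shift (m : ℕ) : ∃ σ, IsShift m σ := by
  refine ⟨(finRotate (m + 1)).symm.arrowCongr (Equiv.refl _), ?_⟩
  intro v i
  simp [Equiv.arrowCongr]

open Classical in
lemma exists_cyc (m : ℕ) : ∃ σ, IsShift m σ ∧ ∀ v, σ.SameCycle (fun _ => false) v := by
  obtain ⟨σ, hσ, hmax⟩ := Set.exists_max_image {σ | IsShift m σ}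
    (fun σ => (Finset.univ.filter (fun v => σ.SameCycle (fun _ => false) v)).card)
    (Set.toFinite _) (exists_shift m)
  refine ⟨σ, hσ, ?_⟩
  have hσ' : ∀ v (i : Fin m), σ v i.castSucc = v i.succ := hσ
  have conj : ∀ x y : Fin (m + 1) → Bool, (∀ i : Fin m, x i.succ = y i.succ) →
      σ.SameCycle (fun _ => false) x → σ.SameCycle (fun _ => false) y := by
    intro x y hxy hx
    by_contra hy
    have hn : ¬ σ.SameCycle x y := fun h => hy (hx.trans h)
    have hs : IsShift m (σ * swap x y) := by
      intro v i
      rw [Perm.mul_apply, hσ']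
      by_cases h1 : v = x
      · subst h1; simp [hxy]
      · by_cases h2 : v = y
        · subst h2; simp [hxy]
        · rw [swap_apply_of_ne_of_ne h1 h2]
    have := hmax _ hs
    refine absurd this (not_le.2 (Finset.card_lt_card ?_))
    rw [Finset.ssubset_iff_of_subset]
    · refine ⟨y, ?_, by simpa using hy⟩
      simp only [Finset.mem_filter, Finset.mem_univ, true_and]
      exact (sameCycle_mono σ x y hn _ _ hx).trans (sameCycle_merge σ x y hn)
    · intro v hv
      simp only [Finset.mem_filter, Finset.mem_univ, true_and] at hv ⊢
      exact sameCycle_mono σ x y hn _ _ hv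
  have clo : ∀ u v : Fin (m + 1) → Bool, (∀ i : Fin m, v i.castSucc = u i.succ) →
      σ.SameCycle (fun _ => false) u → σ.SameCycle (fun _ => false) v := by
    intro u v huv hu
    have h1 : σ.SameCycle (fun _ => false) (σ.symm v) := by
      refine conj u _ ?_ hu
      intro i
      have h0 := hσ' (σ.symm v) i
      rw [Equiv.apply_symm_apply, huv] at h0
      exact h0
    have := Perm.sameCycle_apply_right.2 h1
    simpa using this
  intro v
  let g : ℕ → Bool := fun i => if h : m + 1 ≤ i ∧ i - (m + 1) < m + 1 then v ⟨i - (m + 1), h.2⟩ else false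
  have hw : ∀ j, σ.SameCycle (fun _ => false) (fun i : Fin (m + 1) => g (j + i)) := by
    intro j
    induction j with
    | zero =>
      convert Perm.SameCycle.refl _ _ using 1
      funext i
      have := i.2
      simp only [g]
      rw [dif_neg (by omega)]
    | succ j ih =>
      refine clo _ _ ?_ ih
      intro i
      simp only [Fin.val_castSucc, Fin.val_succ]
      congr 1
      omega
  convert hw (m + 1) using 1
  funext i
  have := i.2
  simp only [g]
  rw [dif_pos (by omega)]
  congr 1
  ext
  simp

lemma exists_seq (m : ℕ) : ∃ c : ℕ → Bool, (∀ j, c (j + 2 ^ (m + 1)) = c j) ∧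
    ∀ v : Fin (m + 1) → Bool, ∃! p, p < 2 ^ (m + 1) ∧ ∀ i : Fin (m + 1), c (p + i) = v i := by
  obtain ⟨σ, hσ, hc⟩ := exists_cyc m
  have hon : σ.IsCycleOn (Finset.univ : Finset (Fin (m + 1) → Bool)) := by
    refine ⟨by simp, ?_⟩
    intro a _ b _
    exact (hc a).symm.trans (hc b)
  have hcard : (Finset.univ : Finset (Fin (m + 1) → Bool)).card = 2 ^ (m + 1) := by simp
  set z : Fin (m + 1) → Bool := fun _ => false with hz
  have hwin : ∀ (i : ℕ) (hi : i < m + 1) (j : ℕ), (σ ^ j) z ⟨i, hi⟩ = (σ ^ (j + i)) z 0 := by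
    intro i
    induction i with
    | zero => intro hi j; rfl
    | succ i ih =>
      intro hi j
      have := hσ ((σ ^ j) z) ⟨i, by omega⟩
      rw [← Perm.mul_apply, ← pow_succ'] at this
      have h2 := ih (by omega) (j + 1)
      rw [show j + (i + 1) = j + 1 + i by ring, ← h2]
      exact this.symm
  refine ⟨fun j => (σ ^ j) z 0, ?_, ?_⟩
  · intro j
    have : (σ ^ (j + 2 ^ (m + 1))) z = (σ ^ j) z := by
      rw [hon.pow_apply_eq_pow_apply (Finset.mem_univ _), hcard]
      simp [Nat.ModEq]
    simp only [this]
  · have hiff : ∀ p v, (∀ i : Fin (m + 1), (σ ^ (p + i)) z 0 = v i) ↔ (σ ^ p) z = v := by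
      intro p v
      rw [funext_iff]
      refine forall_congr' fun i => ?_
      rw [← hwin i i.2 p]
    intro v
    simp only [hiff]
    obtain ⟨p, hp, hpv⟩ := hon.exists_pow_eq (Finset.mem_univ z) (Finset.mem_univ v)
    rw [hcard] at hp
    refine ⟨p, ⟨hp, hpv⟩, ?_⟩
    rintro q ⟨hq, hqv⟩
    have := hqv.trans hpv.symm
    rw [hon.pow_apply_eq_pow_apply (Finset.mem_univ _), hcard] at this
    exact Nat.ModEq.eq_of_lt_of_lt this hq hp

end Perm

lemma filter_len_one (N : ℕ) (p : ℕ → Bool) :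
    ((List.range N).filter p).length = 1 ↔ ∃! i, i < N ∧ p i = true := by
  have h1 : ((List.range N).filter p).length
      = ((Finset.range N).filter (fun i => p i = true)).card := by
    rw [← List.toFinset_card_of_nodup (List.nodup_range.filter _)]
    congr 1
    ext i
    simp
  rw [h1, Finset.card_eq_one]
  constructor
  · rintro ⟨a, ha⟩
    have h2 : ∀ i, (i < N ∧ p i = true) ↔ i = a := by
      intro i
      have := Finset.ext_iff.1 ha i
      simpa using this
    exact ⟨a, (h2 a).2 rfl, fun y hy => (h2 y).1 hy⟩
  · rintro ⟨a, ha, hu⟩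
    refine ⟨a, ?_⟩
    ext i
    simp only [Finset.mem_filter, Finset.mem_range, Finset.mem_singleton]
    exact ⟨hu i, fun h => h ▸ ha⟩

lemma window_iff (x w : List Bool) (n N : ℕ) (c : ℕ → Bool)
    (hxc : ∀ p < N, x[p]? = some (c p)) (i : ℕ) (hi : i + n ≤ N) (hw : w.length = n) :
    (x.drop i).take n = w ↔ ∀ k < n, w[k]? = some (c (i + k)) := by
  constructor
  · rintro rfl k hk
    rw [List.getElem?_take_of_lt hk, List.getElem?_drop]
    exact hxc _ (by omega)
  · intro h
    apply List.ext_getElem?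
    intro k
    by_cases hk : k < n
    · rw [List.getElem?_take_of_lt hk, List.getElem?_drop, h k hk]
      exact hxc _ (by omega)
    · rw [List.getElem?_take_eq_none (by omega), List.getElem?_eq_none (by omega)]

lemma deBruijn_iff (n : ℕ) (hn : 1 ≤ n) (x : List Bool) (c : ℕ → Bool)
    (hper : ∀ j, c (j + 2 ^ n) = c j) (hlen : x.length = 2 ^ n)
    (hxc : ∀ p < 2 ^ n, x[p]? = some (c p)) (w : List Bool) (hw : w.length = n) :
    occ w (x ++ x.take (n - 1)) = 1 ↔
      ∃! p, p < 2 ^ n ∧ ∀ k < n, w[k]? = some (c (p + k)) := by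
  have hlt : n < 2 ^ n := Nat.lt_two_pow_self
  have hl : (x ++ x.take (n - 1)).length = 2 ^ n + (n - 1) := by
    rw [List.length_append, List.length_take, hlen]; omega
  have hget : ∀ p < 2 ^ n + (n - 1), (x ++ x.take (n - 1))[p]? = some (c p) := by
    intro p hp
    by_cases h : p < 2 ^ n
    · rw [List.getElem?_append_left (by omega)]
      exact hxc p h
    · rw [List.getElem?_append_right (by omega), hlen, List.getElem?_take_of_lt (by omega),
        hxc _ (by omega), ← hper]
      congr 2
      omega
  unfold occ
  rw [filter_len_one, hl, hw]
  refine existsUnique_congr fun p => ?_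
  rw [show 2 ^ n + (n - 1) + 1 - n = 2 ^ n by omega]
  refine and_congr_right fun hp => ?_
  rw [decide_eq_true_iff]
  exact window_iff _ w n _ c hget p (by omega) hw

lemma exists_deBruijn (n : ℕ) (hn : 1 ≤ n) : ∃ x, IsDeBruijn n x := by
  obtain ⟨m, rfl⟩ : ∃ m, n = m + 1 := ⟨n - 1, by omega⟩
  obtain ⟨c, hper, hc⟩ := exists_seq m
  refine ⟨(List.range (2 ^ (m + 1))).map c, by simp, ?_⟩
  intro w hw
  rw [deBruijn_iff (m + 1) hn _ c hper (by simp) _ w hw]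
  · have := hc (fun i => w[i.1]'(by omega))
    refine (existsUnique_congr fun p => and_congr_right fun hp => ?_).1 this
    constructor
    · intro h k hk
      rw [h ⟨k, hk⟩]
      exact List.getElem?_eq_getElem _
    · intro h i
      have := h i.1 i.2
      rw [List.getElem?_eq_getElem (by omega)] at this
      exact (Option.some.inj this).symm
  · intro p hp
    simp [hp]

lemma db_spec (n : ℕ) (hn : 1 ≤ n) : IsDeBruijn n (db n) := by
  have h : ∃ x : List Bool, IsDeBruijn n x ∧ ∀ y, IsDeBruijn n y → x ≤ y := by
    have hf : {x : List Bool | IsDeBruijn n x}.Finite :=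
      (List.finite_length_eq Bool (2 ^ n)).subset (fun x hx => hx.1)
    obtain ⟨x, hx, hm⟩ := Set.exists_min_image _ id hf (exists_deBruijn n hn)
    exact ⟨x, hx, fun y hy => hm y hy⟩
  unfold db
  rw [dif_pos h]
  exact h.choose_spec.1

lemma flatten_uniform (L : ℕ) (f : ℕ → List Bool) (hf : ∀ i, (f i).length = L) (a : ℕ) :
    (((List.range a).map f).flatten).length = a * L ∧
    ∀ p < a * L, (((List.range a).map f).flatten)[p]? = (f (p / L))[p % L]? := by
  induction a with
  | zero => simp
  | succ a ih =>
    obtain ⟨ih1, ih2⟩ := ih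
    rw [List.range_succ, List.map_append, List.flatten_append]
    have e : (List.map f [a]).flatten = f a := by simp
    rw [e]
    refine ⟨by rw [List.length_append, ih1, hf]; ring, ?_⟩
    intro p hp
    by_cases h : p < a * L
    · rw [List.getElem?_append_left (by omega), ih2 p h]
    · rw [List.getElem?_append_right (by omega), ih1]
      push Not at h
      obtain ⟨q, rfl⟩ := Nat.exists_eq_add_of_le h
      have hq : q < L := by rw [Nat.add_mul] at hp; omega
      have h1 : (a * L + q) / L = a := by
        rw [mul_comm, Nat.mul_add_div (by omega), Nat.div_eq_of_lt hq, add_zero]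
      have h2 : (a * L + q) % L = q := by
        rw [mul_comm, Nat.mul_add_mod, Nat.mod_eq_of_lt hq]
      rw [h1, h2]
      congr 1
      omega

lemma index_bij (n s t : ℕ) (hn : 1 ≤ n) (hst : n = 2 ^ s * t) (hodd : Nat.Coprime 2 t)
    (hs : s ≤ n) (m m' : ℕ) (hm : m < 2 ^ n) (hm' : m' < 2 ^ n)
    (h : m / 2 ^ (n - s) + n * m ≡ m' / 2 ^ (n - s) + n * m' [MOD 2 ^ n]) : m = m' := by
  have hM : 2 ^ n = 2 ^ s * 2 ^ (n - s) := by rw [← pow_add]; congr 1; omega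
  have hb : ∀ m, m < 2 ^ n → m / 2 ^ (n - s) < 2 ^ s := by
    intro m hm
    rw [Nat.div_lt_iff_lt_mul (by positivity), ← hM]
    exact hm
  have e : ∀ m, m / 2 ^ (n - s) + n * m ≡ m / 2 ^ (n - s) [MOD 2 ^ s] := by
    intro m
    have : n * m = 2 ^ s * (t * m) := by rw [← mul_assoc, ← hst]
    rw [this]
    simp [Nat.ModEq]
  have h1 : m / 2 ^ (n - s) = m' / 2 ^ (n - s) := by
    have h2 := h.of_dvd (pow_dvd_pow 2 hs)
    exact Nat.ModEq.eq_of_lt_of_lt ((e m).symm.trans (h2.trans (e m'))) (hb m hm) (hb m' hm')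
  rw [h1] at h
  have h3 : n * m ≡ n * m' [MOD 2 ^ n] := Nat.ModEq.add_left_cancel' _ h
  have h4 : 2 ^ s * (t * m) ≡ 2 ^ s * (t * m') [MOD 2 ^ s * 2 ^ (n - s)] := by
    rw [← mul_assoc, ← mul_assoc, ← hst, ← hM]; exact h3
  have h5 := Nat.ModEq.mul_left_cancel' (by positivity) h4
  have h6 : m ≡ m' [MOD 2 ^ (n - s)] :=
    Nat.ModEq.cancel_left_of_coprime (Nat.Coprime.pow_left _ hodd) h5
  rw [← Nat.div_add_mod m (2 ^ (n - s)), ← Nat.div_add_mod m' (2 ^ (n - s)), h1, h6]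

lemma Sblk_get (n s t : ℕ) (hs : n.factorization 2 = s) (ht : oddPart n = t)
    (d : List Bool) (hd : db n = d) (hlen : d.length = 2 ^ n) :
    (Sblk n).length = 2 ^ s * (t * 2 ^ n) ∧
    ∀ p < 2 ^ s * (t * 2 ^ n),
      (Sblk n)[p]? = some (d.getD ((p / (t * 2 ^ n) + p) % 2 ^ n) false) := by
  have hB : ∀ i, Bblk n t i = ((List.range t).map (fun _ => d.rotate i)).flatten := by
    intro i
    unfold Bblk
    rw [hd]
    simp [List.map_const']
  have hBs : ∀ i, (Bblk n t i).length = t * 2 ^ n ∧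
      ∀ p < t * 2 ^ n, (Bblk n t i)[p]? = (d.rotate i)[p % 2 ^ n]? := by
    intro i
    rw [hB]
    exact flatten_uniform (2 ^ n) (fun _ => d.rotate i) (by simp [hlen]) t
  unfold Sblk
  rw [hs, ht]
  obtain ⟨h1, h2⟩ := flatten_uniform (t * 2 ^ n) (fun i => Bblk n t i) (fun i => (hBs i).1) (2 ^ s)
  refine ⟨h1, ?_⟩
  intro p hp
  have hpos : 0 < t * 2 ^ n := by
    rcases Nat.eq_zero_or_pos (t * 2 ^ n) with h | h
    · rw [h] at hp; omega
    · exact h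
  have h2n : 0 < 2 ^ n := by positivity
  rw [h2 p hp, (hBs _).2 _ (Nat.mod_lt _ hpos), Nat.mod_mul_left_mod,
    List.getElem?_rotate (by rw [hlen]; exact Nat.mod_lt _ h2n), hlen]
  have e : (p % 2 ^ n + p / (t * 2 ^ n)) % 2 ^ n = (p / (t * 2 ^ n) + p) % 2 ^ n := by
    rw [Nat.mod_add_mod, add_comm]
  rw [e, List.getD_eq_getElem?_getD, List.getElem?_eq_getElem (by rw [hlen]; exact Nat.mod_lt _ h2n)]
  rfl

/-- For every `n ≥ 1` and every binary string `w` of length `n`, `w` occurs exactly once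
in `S_n` at a starting position divisible by `n`. -/
theorem stmt3 (n : ℕ) (hn : 1 ≤ n) (w : List Bool) (hw : w.length = n) :
    occB w (Sblk n) = 1 := by
  have hlt : n < 2 ^ n := Nat.lt_two_pow_self
  have h2n : 0 < 2 ^ n := by positivity
  obtain ⟨s, hs⟩ : ∃ s, n.factorization 2 = s := ⟨_, rfl⟩
  obtain ⟨t, ht⟩ : ∃ t, oddPart n = t := ⟨_, rfl⟩
  obtain ⟨d, hd⟩ : ∃ d, db n = d := ⟨_, rfl⟩
  have hst : n = 2 ^ s * t := by
    rw [← hs, ← ht]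
    exact (Nat.ordProj_mul_ordCompl_eq_self n 2).symm
  have hodd : Nat.Coprime 2 t := by
    rw [← ht]
    exact Nat.coprime_ordCompl Nat.prime_two (by omega)
  have hsn : s ≤ n := by
    have : s < 2 ^ s := Nat.lt_two_pow_self
    have h2 : 2 ^ s ≤ n := Nat.le_of_dvd hn ⟨t, hst⟩
    omega
  have hdb := db_spec n hn
  rw [hd] at hdb
  obtain ⟨hlen, hocc⟩ := hdb
  obtain ⟨hSl, hSg⟩ := Sblk_get n s t hs ht d hd hlen
  have hLn : t * 2 ^ n = n * 2 ^ (n - s) := by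
    have hM : 2 ^ n = 2 ^ s * 2 ^ (n - s) := by rw [← pow_add]; congr 1; omega
    calc t * 2 ^ n = (2 ^ s * t) * 2 ^ (n - s) := by rw [hM]; ring
      _ = _ := by rw [← hst]
  have hN : 2 ^ s * (t * 2 ^ n) = n * 2 ^ n := by rw [← mul_assoc, ← hst]
  rw [hN] at hSl hSg
  obtain ⟨c, hc⟩ : ∃ c : ℕ → Bool, c = fun j => d.getD (j % 2 ^ n) false := ⟨_, rfl⟩
  have hcmod : ∀ a b, a ≡ b [MOD 2 ^ n] → c a = c b := by
    intro a b h
    rw [hc]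
    change d.getD (a % 2 ^ n) false = d.getD (b % 2 ^ n) false
    rw [h]
  have hdc : ∀ p < 2 ^ n, d[p]? = some (c p) := by
    intro p hp
    rw [hc]
    simp only [Nat.mod_eq_of_lt hp]
    rw [List.getD_eq_getElem?_getD, List.getElem?_eq_getElem (by omega)]
    rfl
  have hu := (deBruijn_iff n hn d c (fun j => hcmod _ _ (by simp [Nat.ModEq])) hlen hdc w hw).1
    (hocc w hw)
  have hget : ∀ p < n * 2 ^ n, (Sblk n)[p]? = some (c (p / (t * 2 ^ n) + p)) := by
    intro p hp
    rw [hSg p hp, hc]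
  -- position predicate
  have hwin : ∀ m < 2 ^ n, (((Sblk n).drop (n * m)).take n = w ↔
      ∀ k < n, w[k]? = some (c ((m / 2 ^ (n - s) + n * m) % 2 ^ n + k))) := by
    intro m hm
    have hle : n * m + n ≤ n * 2 ^ n := by
      calc n * m + n = n * (m + 1) := by ring
        _ ≤ _ := Nat.mul_le_mul_left _ hm
    rw [window_iff _ w n _ _ hget (n * m) hle hw]
    refine forall_congr' fun k => forall_congr' fun hk => ?_
    have e1 : (n * m + k) / (t * 2 ^ n) = m / 2 ^ (n - s) := by
      rw [hLn, ← Nat.div_div_eq_div_mul, Nat.mul_add_div (by omega), Nat.div_eq_of_lt hk, add_zero]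
    rw [e1, ← add_assoc, hcmod (m / 2 ^ (n - s) + n * m + k)
      ((m / 2 ^ (n - s) + n * m) % 2 ^ n + k) (Nat.ModEq.add_right _ (Nat.mod_modEq _ _).symm)]
  let F : Fin (2 ^ n) → Fin (2 ^ n) :=
    fun m => ⟨(m / 2 ^ (n - s) + n * m) % 2 ^ n, Nat.mod_lt _ h2n⟩
  have hFi : Function.Injective F := by
    intro a b hab
    have := congrArg Fin.val hab
    exact Fin.ext (index_bij n s t hn hst hodd hsn a b a.2 b.2 this)
  have hFs : Function.Surjective F := Finite.injective_iff_surjective.1 hFi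
  obtain ⟨p, ⟨hp, hpw⟩, hpu⟩ := hu
  obtain ⟨m, hm⟩ := hFs ⟨p, hp⟩
  have hmv : (m.1 / 2 ^ (n - s) + n * m.1) % 2 ^ n = p := congrArg Fin.val hm
  unfold occB
  rw [filter_len_one, hSl, hw]
  refine ⟨n * m.1, ⟨?_, ?_⟩, ?_⟩
  · have hle : n * m.1 + n ≤ n * 2 ^ n := by
      calc n * m.1 + n = n * (m.1 + 1) := by ring
        _ ≤ _ := Nat.mul_le_mul_left _ m.2
    omega
  · rw [Bool.and_eq_true, decide_eq_true_iff, decide_eq_true_iff, hwin m.1 m.2, hmv]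
    exact ⟨Nat.mul_mod_right _ _, hpw⟩
  · rintro i ⟨hi, h⟩
    rw [Bool.and_eq_true, decide_eq_true_iff, decide_eq_true_iff] at h
    obtain ⟨h0, h1⟩ := h
    obtain ⟨q, rfl⟩ := Nat.dvd_of_mod_eq_zero h0
    have hq : q < 2 ^ n := by
      have : n * q < n * 2 ^ n := by omega
      exact Nat.lt_of_mul_lt_mul_left this
    rw [hwin q hq] at h1
    have h2 := hpu _ ⟨Nat.mod_lt _ h2n, h1⟩
    have h3 : F ⟨q, hq⟩ = F m := by
      rw [hm]
      exact Fin.ext h2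
    have := congrArg Fin.val (hFi h3)
    simp only at this
    rw [this]
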